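/- arXiv:1708.06854 — 3 statements merged into one kernel-verified Lean document; each statement's English description precedes it below -/
import Mathlib

section
/- For every natural number i, the i-th bo-Brown-Gitler polynomial satisfies f_i(s,t,x) \equiv t^{i-m} x^m modulo the ideal (s) of \mathbb{Z}[s,t,x], where m is the number of 1's in the dyadic (binary) expansion of i. Equivalently, substituting s = 0 into f_i yields the monomial t^{i-m} x^m. -/
/-!
Setting `s = 0` turns the recursion into `f (2j) = t ^ j * f j` and `f (2j+1) = t ^ j * x * f j`.
Appending a binary digit `0` to `j` keeps the number `m` of ones and appending `1` raises it by one,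
so by strong induction the claim follows from `j + (j - m) = 2j - m = (2j+1) - (m+1)`. These
identities hold in `ℕ` because `m ≤ j`, which is `count_one_digits_le`.
-/

open MvPolynomial

/-- The variable `s`. -/
noncomputable def s : MvPolynomial (Fin 3) ℤ := X 0
/-- The variable `t`. -/
noncomputable def t : MvPolynomial (Fin 3) ℤ := X 1
/-- The variable `x`. -/
noncomputable def x : MvPolynomial (Fin 3) ℤ := X 2

/-- The bo-Brown-Gitler polynomials: `f 0 = 1`, `f 1 = x`,
`f (2j) = t^j * f j + s * t^(j+1) * f (j-1)`, `f (2j+1) = t^j * x * f j`. -/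
noncomputable def f : ℕ → MvPolynomial (Fin 3) ℤ
  | 0 => 1
  | 1 => x
  | n + 2 =>
    if n % 2 = 0 then
      t ^ ((n + 2) / 2) * f ((n + 2) / 2)
        + s * t ^ ((n + 2) / 2 + 1) * f ((n + 2) / 2 - 1)
    else
      t ^ ((n + 2) / 2) * x * f ((n + 2) / 2)
  decreasing_by all_goals omega

theorem count_one_digits_two_mul {j : ℕ} (hj : 0 < j) :
    (Nat.digits 2 (2 * j)).count 1 = (Nat.digits 2 j).count 1 := by
  rw [Nat.digits_def' (by norm_num) (by omega), Nat.mul_mod_right,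
    Nat.mul_div_cancel_left _ (by norm_num)]
  simp

theorem count_one_digits_two_mul_add_one (j : ℕ) :
    (Nat.digits 2 (2 * j + 1)).count 1 = (Nat.digits 2 j).count 1 + 1 := by
  rw [Nat.digits_def' (by norm_num) (by omega), show (2 * j + 1) % 2 = 1 by omega,
    show (2 * j + 1) / 2 = j by omega]
  simp

theorem count_one_digits_le (i : ℕ) : (Nat.digits 2 i).count 1 ≤ i := by
  induction i using Nat.strong_induction_on with
  | _ i ih =>
    obtain ⟨j, rfl | rfl⟩ := Nat.even_or_odd' i
    · rcases Nat.eq_zero_or_pos j with rfl | hj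
      · simp
      · have := ih j (by omega)
        rw [count_one_digits_two_mul hj]
        omega
    · rcases Nat.eq_zero_or_pos j with rfl | hj
      · simp
      · have := ih j (by omega)
        rw [count_one_digits_two_mul_add_one]
        omega

theorem f_two_mul {j : ℕ} (hj : 0 < j) :
    f (2 * j) = t ^ j * f j + s * t ^ (j + 1) * f (j - 1) := by
  obtain ⟨k, rfl⟩ := Nat.exists_eq_add_of_lt hj
  rw [show 2 * (0 + k + 1) = 2 * k + 2 by ring, f, if_pos (by omega),
    show (2 * k + 2) / 2 = 0 + k + 1 by omega]

theorem f_two_mul_add_one {j : ℕ} (hj : 0 < j) : f (2 * j + 1) = t ^ j * x * f j := by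
  obtain ⟨k, rfl⟩ := Nat.exists_eq_add_of_lt hj
  rw [show 2 * (0 + k + 1) + 1 = (2 * k + 1) + 2 by ring, f, if_neg (by omega),
    show (2 * k + 1 + 2) / 2 = 0 + k + 1 by omega]

/-- Substituting `s = 0` into `f i` yields the monomial `t ^ (i - m) * x ^ m`,
where `m` is the number of 1's in the binary expansion of `i`. -/
theorem stmt1 (i : ℕ) (m : ℕ) (hm : m = ((Nat.digits 2 i).count 1)) :
    MvPolynomial.aeval (fun v : Fin 3 => if v = 0 then 0 else MvPolynomial.X v) (f i)
      = t ^ (i - m) * x ^ m := by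
  subst hm
  set φ : MvPolynomial (Fin 3) ℤ →ₐ[ℤ] MvPolynomial (Fin 3) ℤ :=
    MvPolynomial.aeval (fun v : Fin 3 => if v = 0 then 0 else MvPolynomial.X v) with hφ
  have hs : φ s = 0 := by simp [hφ, s]
  have ht : φ t = t := by simp [hφ, t]
  have hx : φ x = x := by simp [hφ, x]
  induction i using Nat.strong_induction_on with
  | _ i ih =>
    obtain ⟨j, rfl | rfl⟩ := Nat.even_or_odd' i
    · rcases Nat.eq_zero_or_pos j with rfl | hj
      · simp [f]
      · have hle := count_one_digits_le j
        rw [f_two_mul hj, count_one_digits_two_mul hj, map_add, map_mul, map_mul, map_mul,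
          map_pow, hs, ht, ih j (by omega),
          show 2 * j - (Nat.digits 2 j).count 1 = j + (j - (Nat.digits 2 j).count 1) by omega]
        ring
    · rcases Nat.eq_zero_or_pos j with rfl | hj
      · simp [f, hx]
      · have hle := count_one_digits_le j
        rw [f_two_mul_add_one hj, count_one_digits_two_mul_add_one, map_mul, map_mul, map_pow,
          ht, hx, ih j (by omega),
          show 2 * j + 1 - ((Nat.digits 2 j).count 1 + 1)
            = j + (j - (Nat.digits 2 j).count 1) by omega]
        ring
end

section
/- For every natural number i, the highest power of x appearing in the i-th bo-Brown-Gitler polynomial f_i(s,t,x) (i.e., the degree of f_i in the variable x) is less than or equal to the number of digits in the dyadic (binary) expansion of i. -/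
/-!
Passing from `i` to `j` or `j - 1` with `j = i / 2` removes a binary digit, and the recursion
introduces at most one new factor `x` while doing so; powers of `t` and the factor `s` have
degree `0` in `x`. Hence `i < 2 ^ d` bounds the degree in `x` by `d` (`degreeOf_f_le`), and the
theorem is the case `d = Nat.size i`.
-/

open MvPolynomial

/-- Bounding by any `d` with `i < 2 ^ d`, not only the least one, lets the inductive hypothesis
apply to both `i / 2` and `i / 2 - 1`, which may have different numbers of digits. -/
theorem degreeOf_f_le (d : ℕ) : ∀ i < 2 ^ d, degreeOf 2 (f i) ≤ d := by
  have ht (k : ℕ) : degreeOf 2 (t ^ k) = 0 := by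
    have h := degreeOf_pow_le 2 t k
    have h0 : degreeOf 2 t = 0 := by simp [t, degreeOf_X]
    simpa [h0] using h
  have hs : degreeOf 2 s = 0 := by simp [s, degreeOf_X]
  have hx : degreeOf 2 x = 1 := by simp [x]
  induction d with
  | zero =>
    intro i hi
    obtain rfl : i = 0 := by simpa using hi
    simp [f]
  | succ d ih =>
    intro i hi
    rw [pow_succ] at hi
    match i, hi with
    | 0, _ => simp [f]
    | 1, _ => simp [f, hx]
    | n + 2, hi =>
      have h1 := ih ((n + 2) / 2) (by omega)
      have h2 := ih ((n + 2) / 2 - 1) (by omega)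
      rw [f]
      split_ifs
      · refine (degreeOf_add_le _ _ _).trans (max_le ?_ ?_)
        · have := degreeOf_mul_le 2 (t ^ ((n + 2) / 2)) (f ((n + 2) / 2))
          have := ht ((n + 2) / 2)
          omega
        · have := degreeOf_mul_le 2 (s * t ^ ((n + 2) / 2 + 1)) (f ((n + 2) / 2 - 1))
          have := degreeOf_mul_le 2 s (t ^ ((n + 2) / 2 + 1))
          have := ht ((n + 2) / 2 + 1)
          omega
      · have := degreeOf_mul_le 2 (t ^ ((n + 2) / 2) * x) (f ((n + 2) / 2))
        have := degreeOf_mul_le 2 (t ^ ((n + 2) / 2)) x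
        have := ht ((n + 2) / 2)
        omega

/-- The degree of `f i` in the variable `x` is at most the number of binary digits
of `i` (i.e. `Nat.size i`, the least `d` with `i < 2 ^ d`). -/
theorem stmt2 (i : ℕ) : MvPolynomial.degreeOf 2 (f i) ≤ Nat.size i := by
  exact degreeOf_f_le _ i (Nat.lt_size_self i)
end

section
/- For every natural number i, the highest power of s appearing in the i-th bo-Brown-Gitler polynomial f_i(s,t,x) (i.e., the degree of f_i in the variable s) equals the number of 1's to the left of the rightmost 0 in the dyadic (binary) expansion of i; precisely, letting z be the least natural number n such that the n-th binary digit of i is 0, the degree of f_i in s equals the number of indices n > z such that the n-th binary digit of i is 1. -/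
/-! Writing `D i` for the degree of `f i` in `s` and `pc i` for the number of 1's in binary `i`,
the recursion gives `D (2j+1) = D j` and, since all coefficients are nonnegative and so nothing
cancels (`degreeOf_add_of_nonneg`), `D (2j) = max (D j) (1 + D (j-1))` for `j ≥ 1`.
Induction then shows `D i + 1 = pc (i+1)` together with `D i ≤ pc i` (`degree_pc`): the maximum
above is attained by its second term, so `D (2j) = pc j`. Stripping the trailing 1's of `i` by
`D (2j+1) = D j` until an even number is reached yields the count of 1's left of the
rightmost 0. -/


open MvPolynomial

/-- All coefficients of `p` are nonnegative. -/
def CoeffNonneg (p : MvPolynomial (Fin 3) ℤ) : Prop := ∀ m, 0 ≤ p.coeff m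

lemma CoeffNonneg.add {p q : MvPolynomial (Fin 3) ℤ} (hp : CoeffNonneg p) (hq : CoeffNonneg q) :
    CoeffNonneg (p + q) := fun m => by
  rw [coeff_add]; exact add_nonneg (hp m) (hq m)

lemma CoeffNonneg.mul {p q : MvPolynomial (Fin 3) ℤ} (hp : CoeffNonneg p) (hq : CoeffNonneg q) :
    CoeffNonneg (p * q) := fun m => by
  classical
  rw [coeff_mul]; exact Finset.sum_nonneg fun a _ => mul_nonneg (hp _) (hq _)

lemma coeffNonneg_one : CoeffNonneg 1 := fun m => by
  classical
  rw [coeff_one]; split_ifs <;> simp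

lemma coeffNonneg_X (k : Fin 3) : CoeffNonneg (X k) := fun m => by
  classical
  rw [coeff_X]; split_ifs <;> simp

lemma coeffNonneg_s : CoeffNonneg s := coeffNonneg_X 0

lemma s_ne_zero : s ≠ 0 := X_ne_zero 0

lemma coeffNonneg_t : CoeffNonneg t := coeffNonneg_X 1

lemma t_ne_zero : t ≠ 0 := X_ne_zero 1

lemma coeffNonneg_x : CoeffNonneg x := coeffNonneg_X 2

lemma x_ne_zero : x ≠ 0 := X_ne_zero 2

lemma CoeffNonneg.pow {p : MvPolynomial (Fin 3) ℤ} (hp : CoeffNonneg p) (n : ℕ) :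
    CoeffNonneg (p ^ n) := by
  induction n with
  | zero => simpa using coeffNonneg_one
  | succ n ih => rw [pow_succ]; exact ih.mul hp

lemma support_subset_of_nonneg {p q : MvPolynomial (Fin 3) ℤ} (hp : CoeffNonneg p)
    (hq : CoeffNonneg q) : p.support ⊆ (p + q).support := by
  intro m hm
  rw [mem_support_iff] at hm ⊢
  rw [coeff_add]
  have := hp m
  have := hq m
  omega

/-- Without cancellation, the degree of a sum is the maximum of the degrees. -/
lemma degreeOf_add_of_nonneg {p q : MvPolynomial (Fin 3) ℤ} (hp : CoeffNonneg p)
    (hq : CoeffNonneg q) (k : Fin 3) :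
    degreeOf k (p + q) = max (degreeOf k p) (degreeOf k q) := by
  refine le_antisymm (degreeOf_add_le k p q) (max_le ?_ ?_)
  · rw [degreeOf_eq_sup, degreeOf_eq_sup]
    exact Finset.sup_mono (support_subset_of_nonneg hp hq)
  · rw [degreeOf_eq_sup, degreeOf_eq_sup, add_comm]
    exact Finset.sup_mono (support_subset_of_nonneg hq hp)

lemma f_odd (j : ℕ) : f (2 * j + 1) = t ^ j * x * f j := by
  rcases j with _ | j
  · simp [f]
  · rw [show 2 * (j + 1) + 1 = (2 * j + 1) + 2 by ring, f, if_neg (by omega),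
      show (2 * j + 1 + 2) / 2 = j + 1 by omega]

lemma f_even (j : ℕ) :
    f (2 * (j + 1)) = t ^ (j + 1) * f (j + 1) + s * t ^ (j + 2) * f j := by
  rw [show 2 * (j + 1) = 2 * j + 2 by ring, f, if_pos (by omega),
    show (2 * j + 2) / 2 = j + 1 by omega]
  rfl

lemma f_zero : f 0 = 1 := by simp [f]

lemma f_nonneg (i : ℕ) : CoeffNonneg (f i) := by
  induction i using Nat.strong_induction_on with
  | _ i ih =>
    obtain ⟨j, rfl | rfl⟩ := Nat.even_or_odd' i
    · rcases j with _ | j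
      · simpa [f_zero] using coeffNonneg_one
      · rw [f_even]
        exact ((coeffNonneg_t.pow _).mul (ih _ (by omega))).add
          ((coeffNonneg_s.mul (coeffNonneg_t.pow _)).mul (ih _ (by omega)))
    · rw [f_odd]
      rcases j with _ | j
      · simpa [f_zero] using coeffNonneg_x
      · exact ((coeffNonneg_t.pow _).mul coeffNonneg_x).mul (ih _ (by omega))

lemma f_ne_zero (i : ℕ) : f i ≠ 0 := by
  induction i using Nat.strong_induction_on with
  | _ i ih =>
    obtain ⟨j, rfl | rfl⟩ := Nat.even_or_odd' i
    · rcases j with _ | j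
      · simp [f_zero]
      · rw [f_even]
        have h : t ^ (j + 1) * f (j + 1) ≠ 0 :=
          mul_ne_zero (pow_ne_zero _ t_ne_zero) (ih _ (by omega))
        rw [← support_nonempty] at h ⊢
        exact h.mono (support_subset_of_nonneg
          ((coeffNonneg_t.pow _).mul (f_nonneg _))
          ((coeffNonneg_s.mul (coeffNonneg_t.pow _)).mul (f_nonneg _)))
    · rw [f_odd]
      rcases j with _ | j
      · simpa [f_zero] using x_ne_zero
      · exact mul_ne_zero (mul_ne_zero (pow_ne_zero _ t_ne_zero) x_ne_zero)
          (ih _ (by omega))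

lemma degreeOf_t_pow (n : ℕ) : degreeOf 0 (t ^ n) = 0 := by
  rw [degreeOf_pow_eq _ _ _ t_ne_zero, t, degreeOf_X]; simp

lemma degree_odd (j : ℕ) : degreeOf 0 (f (2 * j + 1)) = degreeOf 0 (f j) := by
  have ht : t ^ j ≠ 0 := pow_ne_zero _ t_ne_zero
  have hx : x ≠ 0 := x_ne_zero
  rw [f_odd, degreeOf_mul_eq (mul_ne_zero ht hx) (f_ne_zero j), degreeOf_mul_eq ht hx,
    degreeOf_t_pow, x, degreeOf_X]
  simp

lemma degree_even (j : ℕ) : degreeOf 0 (f (2 * (j + 1))) =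
    max (degreeOf 0 (f (j + 1))) (1 + degreeOf 0 (f j)) := by
  have ht (n : ℕ) : t ^ n ≠ 0 := pow_ne_zero _ t_ne_zero
  have hs : s ≠ 0 := s_ne_zero
  rw [f_even, degreeOf_add_of_nonneg ((coeffNonneg_t.pow _).mul (f_nonneg _))
      ((coeffNonneg_s.mul (coeffNonneg_t.pow _)).mul (f_nonneg _)),
    degreeOf_mul_eq (ht _) (f_ne_zero _), degreeOf_mul_eq (mul_ne_zero hs (ht _)) (f_ne_zero _),
    degreeOf_mul_eq hs (ht _), degreeOf_t_pow, degreeOf_t_pow, s, degreeOf_X]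
  simp

/-- The number of 1's in the binary expansion of `k`. -/
noncomputable def pc (k : ℕ) : ℕ := {n : ℕ | k.testBit n = true}.ncard

lemma pc_zero : pc 0 = 0 := by simp [pc]

lemma pc_even (k : ℕ) : pc (2 * k) = pc k := by
  rw [pc, pc, ← Set.ncard_image_of_injective {n : ℕ | k.testBit n = true} Nat.succ_injective]
  congr 1
  ext n
  rcases n with _ | n <;> simp [Nat.testBit_succ]

lemma finite_testBit (k : ℕ) : {n : ℕ | k.testBit n = true}.Finite :=
  (Set.finite_Iio k).subset fun _ hn =>
    Nat.lt_two_pow_self.trans_le (Nat.ge_two_pow_of_testBit hn)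

lemma pc_odd (k : ℕ) : pc (2 * k + 1) = pc k + 1 := by
  rw [pc, pc, ← Set.ncard_image_of_injective {n : ℕ | k.testBit n = true} Nat.succ_injective,
    ← Set.ncard_insert_of_notMem (a := 0) (by simp) ((finite_testBit k).image _)]
  congr 1
  ext n
  rcases n with _ | n <;> simp [Nat.testBit_succ, Nat.mul_add_div]

/-- The equality and the bound feed each other: the bound at `j` identifies which term attains
the maximum in `degree_even`, and the equality at `j - 1` evaluates that term. -/
lemma degree_pc (i : ℕ) :
    degreeOf 0 (f i) + 1 = pc (i + 1) ∧ degreeOf 0 (f i) ≤ pc i := by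
  induction i using Nat.strong_induction_on with
  | _ i ih =>
    obtain ⟨j, rfl | rfl⟩ := Nat.even_or_odd' i
    · rcases j with _ | j
      · have := pc_odd 0
        simp [f_zero, pc_zero] at this ⊢
        exact this.symm
      · have h1 := ih j (by omega)
        have h2 := ih (j + 1) (by omega)
        rw [degree_even, pc_odd, pc_even]
        omega
    · rcases j with _ | j
      · have h0 := pc_odd 0
        have h1 := pc_even 1
        have h2 := degree_odd 0
        simp [f_zero, pc_zero] at h0 h1 h2 ⊢
        omega
      · have h1 := ih (j + 1) (by omega)
        rw [degree_odd, pc_odd, show 2 * (j + 1) + 1 + 1 = 2 * (j + 1 + 1) by ring, pc_even]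
        omega

lemma degree_two_mul (j : ℕ) : degreeOf 0 (f (2 * j)) = pc j := by
  have := (degree_pc (2 * j)).1
  rw [pc_odd] at this
  omega

/-- The degree of `f i` in the variable `s` equals the number of 1's to the left of
the rightmost 0 in the binary expansion of `i`: if `z` is the least index whose
binary digit of `i` is 0, it is the number of indices `n > z` with `i.testBit n = true`. -/
theorem stmt3 (i z : ℕ) (hz : i.testBit z = false)
    (hzmin : ∀ n < z, i.testBit n = true) :
    MvPolynomial.degreeOf 0 (f i) = {n : ℕ | z < n ∧ i.testBit n = true}.ncard := by
  induction z generalizing i with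
  | zero =>
    obtain ⟨j, rfl | rfl⟩ := Nat.even_or_odd' i
    · rw [degree_two_mul, pc,
        ← Set.ncard_image_of_injective {n : ℕ | j.testBit n = true} Nat.succ_injective]
      congr 1
      ext n
      rcases n with _ | n <;> simp [Nat.testBit_succ]
    · simp at hz
  | succ z ih =>
    obtain ⟨j, rfl | rfl⟩ := Nat.even_or_odd' i
    · simpa using hzmin 0 (by omega)
    · have hb (n : ℕ) : (2 * j + 1).testBit (n + 1) = j.testBit n := by
        simp [Nat.testBit_succ, Nat.mul_add_div]
      rw [degree_odd, ih j (hb z ▸ hz) fun n hn => hb n ▸ hzmin (n + 1) (by omega),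
        ← Set.ncard_image_of_injective {n : ℕ | z < n ∧ j.testBit n = true} Nat.succ_injective]
      congr 1
      ext n
      rcases n with _ | n <;> simp [hb]
end
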